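/- arXiv:2411.10759 — 2 statements merged into one kernel-verified Lean document; each statement's English description precedes it below -/
import Mathlib

section
/- Fix an integer q ≥ 1, a real a_q > 0, reals a_0, a_1, …, a_{q−1}, and a real p₀ > 0. There exists a constant c > 0, depending only on a_q, a_0, …, a_{q−1}, q and p₀ (and not on p), such that for every real p ≥ p₀ the series ∑_{n=0}^∞ n^p · exp(W(n)) converges and ∑_{n=0}^∞ n^p · exp(W(n)) ≤ c^p · a_q^{−(1+p)/q} · Γ(p+1)^{1/q}. -/
/-!
Split `exp (W n) = exp (-(a_q / 2) n ^ q) * exp (W n + (a_q / 2) n ^ q)`.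

The second factor is summable, with a sum `S` that does not involve `p`, because the lower-order
terms of `W` are `o(n ^ q)` (`summable_exp_polynomial`).

For the first factor, `y ^ p * exp (-y) ≤ Γ(p + 1)` for every `y ≥ 0`
(`rpow_mul_exp_neg_le_Gamma`): it is the part over `(y, ∞)` of Euler's integral, with `x ^ p`
replaced by its minimum `y ^ p` there. Taking `y = q δ n ^ q` and extracting the `q`-th root gives
`n ^ p * exp (-δ n ^ q) ≤ (q δ) ^ (-p / q) * Γ(p + 1) ^ (1 / q)`, uniformly in `n`
(`rpow_mul_exp_neg_pow_le`).

With `δ = a_q / 2` the sum is therefore at most `S (q a_q / 2) ^ (-p / q) Γ(p + 1) ^ (1 / q)`.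
The `p`-independent factor `S a_q ^ (1 / q)` is absorbed into `c ^ p` since `M ≤ (M ^ (1 / p₀)) ^ p`
for `M ≥ 1` and `p ≥ p₀`.
-/

open Filter Asymptotics MeasureTheory Set in
lemma rpow_mul_exp_neg_le_Gamma {p y : ℝ} (hp : 0 < p) (hy : 0 ≤ y) :
    y ^ p * Real.exp (-y) ≤ Real.Gamma (p + 1) := by
  have hint := Real.GammaIntegral_convergent (s := p + 1) (by linarith)
  rw [Real.Gamma_eq_integral (by linarith)]
  simp only [add_sub_cancel_right] at hint ⊢
  have hsub : Ioi y ⊆ Ioi (0 : ℝ) := Ioi_subset_Ioi hy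
  calc y ^ p * Real.exp (-y) = ∫ x in Ioi y, y ^ p * Real.exp (-x) := by
        rw [integral_const_mul, integral_exp_neg_Ioi]
    _ ≤ ∫ x in Ioi y, Real.exp (-x) * x ^ p := by
        refine setIntegral_mono_on ((integrableOn_exp_neg_Ioi y).const_mul _)
          (hint.mono_set hsub) measurableSet_Ioi fun x hx => ?_
        rw [mul_comm]
        have : y ^ p ≤ x ^ p := Real.rpow_le_rpow hy (le_of_lt hx) hp.le
        gcongr
    _ ≤ ∫ x in Ioi (0 : ℝ), Real.exp (-x) * x ^ p := by
        refine setIntegral_mono_set hint ?_ hsub.eventuallyLE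
        filter_upwards [ae_restrict_mem measurableSet_Ioi] with x hx
        have : (0 : ℝ) < x := hx
        simp only [Pi.zero_apply]
        positivity

lemma rpow_mul_exp_neg_pow_le {q : ℕ} (hq : 1 ≤ q) {δ p x : ℝ} (hδ : 0 < δ) (hp : 0 < p)
    (hx : 0 ≤ x) :
    x ^ p * Real.exp (-δ * x ^ q) ≤
      ((q : ℝ) * δ) ^ (-p / (q : ℝ)) * Real.Gamma (p + 1) ^ (1 / (q : ℝ)) := by
  have hq0 : (0 : ℝ) < q := by exact_mod_cast hq
  have h := rpow_mul_exp_neg_le_Gamma hp (y := q * δ * x ^ q) (by positivity)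
  have h2 := Real.rpow_le_rpow (by positivity) h (z := 1 / (q : ℝ)) (by positivity)
  have e : ((q * δ * x ^ q) ^ p * Real.exp (-(q * δ * x ^ q))) ^ (1 / (q : ℝ))
      = (q * δ) ^ (p / (q : ℝ)) * (x ^ p * Real.exp (-δ * x ^ q)) := by
    rw [Real.mul_rpow (by positivity) (by positivity),
      Real.mul_rpow (by positivity) (by positivity),
      Real.mul_rpow (by positivity) (by positivity), ← Real.exp_mul, ← Real.rpow_natCast x q,
      ← Real.rpow_mul (by positivity), ← Real.rpow_mul (by positivity),
      ← Real.rpow_mul (by positivity), mul_assoc]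
    congr 2
    · ring
    · congr 1
      field_simp
    · congr 1
      field_simp
  rw [e] at h2
  rw [neg_div, Real.rpow_neg (by positivity), ← div_eq_inv_mul, le_div_iff₀' (by positivity)]
  exact h2

open Filter Asymptotics in
lemma summable_exp_polynomial {q : ℕ} (hq : 1 ≤ q) {b : ℝ} (hb : 0 < b) (a : ℕ → ℝ) :
    Summable fun n : ℕ =>
      Real.exp (-b * (n : ℝ) ^ q + ∑ k ∈ Finset.range q, a k * (n : ℝ) ^ k) := by
  have ho : (fun x : ℝ => ∑ k ∈ Finset.range q, a k * x ^ k) =o[atTop] fun x : ℝ => x ^ q :=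
    IsLittleO.fun_sum fun k hk =>
      (isLittleO_pow_pow_atTop_of_lt (Finset.mem_range.mp hk)).const_mul_left _
  have hev := tendsto_natCast_atTop_atTop.eventually (ho.bound (half_pos hb))
  have hg : Summable fun n : ℕ => Real.exp (n * (-(b / 2))) :=
    Real.summable_exp_nat_mul_iff.mpr (by linarith)
  refine hg.of_norm_bounded_eventually_nat ?_
  filter_upwards [hev, eventually_ge_atTop 1] with n hn h1
  rw [Real.norm_of_nonneg (Real.exp_pos _).le]
  apply Real.exp_le_exp.mpr
  have h1' : (1 : ℝ) ≤ n := by exact_mod_cast h1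
  have hle : (n : ℝ) ≤ (n : ℝ) ^ q := le_self_pow₀ h1' (by omega)
  rw [Real.norm_of_nonneg (by positivity : (0 : ℝ) ≤ (n : ℝ) ^ q)] at hn
  have h2 := (le_abs_self _).trans hn
  nlinarith [mul_le_mul_of_nonneg_left hle (half_pos hb).le]


/-- Lemma 4, first assertion. Fix an integer `q ≥ 1`, a real `a_q > 0`,
reals `a_0, …, a_{q−1}`, and a real `p₀ > 0`, and write
`W(n) = −a_q n^q + a_{q−1} n^{q−1} + ⋯ + a_1 n + a_0`. There exists a constant `c > 0`,
depending only on the coefficients, `q` and `p₀` (and not on `p`), such that for every real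
`p ≥ p₀` the series `∑_{n=0}^∞ n^p · exp(W(n))` converges and
`∑_{n=0}^∞ n^p · exp(W(n)) ≤ c^p · a_q^{−(1+p)/q} · Γ(p+1)^{1/q}`. -/
theorem sum_npow_exp_polynomial_le (q : ℕ) (hq : 1 ≤ q) (aq : ℝ) (haq : 0 < aq)
    (a : ℕ → ℝ) (p₀ : ℝ) (hp₀ : 0 < p₀) :
    ∃ c : ℝ, 0 < c ∧ ∀ p : ℝ, p₀ ≤ p →
      Summable (fun n : ℕ => (n : ℝ) ^ p *
        Real.exp (-aq * (n : ℝ) ^ q + ∑ k ∈ Finset.range q, a k * (n : ℝ) ^ k)) ∧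
      ∑' n : ℕ, (n : ℝ) ^ p *
          Real.exp (-aq * (n : ℝ) ^ q + ∑ k ∈ Finset.range q, a k * (n : ℝ) ^ k) ≤
        c ^ p * aq ^ (-(1 + p) / (q : ℝ)) * Real.Gamma (p + 1) ^ (1 / (q : ℝ)) := by
  have hq0 : (0 : ℝ) < q := by exact_mod_cast hq
  have hS := summable_exp_polynomial hq (half_pos haq) a
  set g : ℕ → ℝ := fun n =>
    Real.exp (-(aq / 2) * (n : ℝ) ^ q + ∑ k ∈ Finset.range q, a k * (n : ℝ) ^ k) with hg
  set S : ℝ := ∑' n, g n with hSdef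
  set M : ℝ := max 1 (S * aq ^ (1 / (q : ℝ))) with hM
  have hM1 : 1 ≤ M := le_max_left _ _
  have hM0 : 0 < M := by linarith
  set r : ℝ := ((q : ℝ) / 2) ^ (-1 / (q : ℝ)) with hr
  have hr0 : 0 < r := by positivity
  refine ⟨M ^ (1 / p₀) * r, by positivity, fun p hpp => ?_⟩
  have hp : 0 < p := hp₀.trans_le hpp
  set K : ℝ := ((q : ℝ) * (aq / 2)) ^ (-p / (q : ℝ)) * Real.Gamma (p + 1) ^ (1 / (q : ℝ)) with hK
  have hG : 0 < Real.Gamma (p + 1) := Real.Gamma_pos_of_pos (by linarith)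
  have hbound : ∀ n : ℕ, (n : ℝ) ^ p *
      Real.exp (-aq * (n : ℝ) ^ q + ∑ k ∈ Finset.range q, a k * (n : ℝ) ^ k) ≤ K * g n := by
    intro n
    have h := rpow_mul_exp_neg_pow_le hq (half_pos haq) hp (Nat.cast_nonneg n)
    calc _ = ((n : ℝ) ^ p * Real.exp (-(aq / 2) * (n : ℝ) ^ q)) * g n := by
          rw [hg, mul_assoc, ← Real.exp_add]
          congr 2
          ring
      _ ≤ K * g n := mul_le_mul_of_nonneg_right h (Real.exp_pos _).le
  have hsum := Summable.of_nonneg_of_le (fun n => by positivity) hbound (hS.mul_left K)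
  refine ⟨hsum, ?_⟩
  have hMp : S * aq ^ (1 / (q : ℝ)) ≤ (M ^ (1 / p₀)) ^ p := by
    rw [← Real.rpow_mul hM0.le]
    calc S * aq ^ (1 / (q : ℝ)) ≤ M := le_max_right _ _
      _ = M ^ (1 : ℝ) := (Real.rpow_one M).symm
      _ ≤ M ^ (1 / p₀ * p) := Real.rpow_le_rpow_of_exponent_le hM1 (by
          rw [one_div_mul_eq_div, one_le_div hp₀]; exact hpp)
  have hKe : ((q : ℝ) * (aq / 2)) ^ (-p / (q : ℝ))
      = r ^ p * (aq ^ (1 / (q : ℝ)) * aq ^ (-(1 + p) / (q : ℝ))) := by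
    rw [hr, ← Real.rpow_mul (by positivity), ← Real.rpow_add haq,
      show (q : ℝ) * (aq / 2) = q / 2 * aq by ring, Real.mul_rpow (by positivity) haq.le]
    congr 2 <;> ring
  calc _ ≤ ∑' n, K * g n := hsum.tsum_le_tsum hbound (hS.mul_left K)
    _ = K * S := tsum_mul_left
    _ = (S * aq ^ (1 / (q : ℝ))) * (r ^ p * aq ^ (-(1 + p) / (q : ℝ)) *
          Real.Gamma (p + 1) ^ (1 / (q : ℝ))) := by rw [hK, hKe]; ring
    _ ≤ (M ^ (1 / p₀)) ^ p * (r ^ p * aq ^ (-(1 + p) / (q : ℝ)) *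
          Real.Gamma (p + 1) ^ (1 / (q : ℝ))) :=
        mul_le_mul_of_nonneg_right hMp (by positivity)
    _ = _ := by rw [Real.mul_rpow (by positivity) hr0.le]; ring
end

section
/- Fix a positive even integer q, a real a_q > 0 and reals a_0, a_1, …, a_{q−1}, and write W(m) = −a_q m^q + a_{q−1} m^{q−1} + ⋯ + a_1 m + a_0 for integers m (possibly negative). There exists a constant c' > 0, depending only on a_q, a_0, …, a_{q−1} and q (and not on p), such that for every integer p ≥ 1 the series ∑_{n=0}^∞ exp( max{ W(m) : m ∈ ℤ, n − p ≤ m ≤ n + p } ) converges and is at most c' · a_q^{−1/q} · p. -/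
/-!
A maximum of exponentials over a window is at most the sum over the window. Writing `g = exp ∘ W`,
the `n`-th term of the series is thus at most `∑_{|j| ≤ p} g (n + j)`, and summing over `n` gives
at most `(2p + 1) ∑_{m ∈ ℤ} g m ≤ 3p ∑_{m ∈ ℤ} g m` (`sum_window_le`). The sum over `ℤ` is finite
because the leading term `-a_q |m|^q`, with `q ≥ 2`, forces `W m ≤ -|m|` once `|m|` is large
(`summable_exp_poly`). As the constant may depend on `a_q`, the factor `a_q^{-1/q}` is absorbed.
-/

lemma summable_exp_neg_abs_int : Summable (fun m : ℤ => Real.exp (-|(m : ℝ)|)) := by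
  apply Summable.of_nat_of_neg
  · simpa using Real.summable_exp_neg_nat
  · simpa using Real.summable_exp_neg_nat

lemma summable_exp_poly (q : ℕ) (hq : 0 < q) (hqe : Even q)
    (aq : ℝ) (haq : 0 < aq) (a : ℕ → ℝ) :
    Summable (fun m : ℤ =>
      Real.exp (-aq * (m : ℝ) ^ q + ∑ k ∈ Finset.range q, a k * (m : ℝ) ^ k)) := by
  set A : ℝ := ∑ k ∈ Finset.range q, |a k|
  have hA : 0 ≤ A := Finset.sum_nonneg fun _ _ => abs_nonneg _
  -- Beyond this radius `1 ≤ |m|` and `A + 1 ≤ a_q |m|`.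
  obtain ⟨N, hN⟩ := exists_nat_ge (max 1 ((A + 1) / aq))
  refine Summable.of_norm_bounded_eventually summable_exp_neg_abs_int ?_
  rw [Filter.eventually_cofinite]
  refine (Set.finite_Icc (-(N : ℤ)) N).subset fun m hm => ?_
  by_contra hout
  refine hm ?_
  have hNm : (N : ℝ) ≤ |(m : ℝ)| := by
    have h : (N : ℤ) ≤ |m| := by
      rw [Set.mem_Icc, ← abs_le] at hout
      exact (not_le.mp hout).le
    exact_mod_cast h
  have h1 : 1 ≤ |(m : ℝ)| := (le_max_left _ _).trans (hN.trans hNm)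
  have h2 : A + 1 ≤ |(m : ℝ)| * aq :=
    (div_le_iff₀ haq).mp ((le_max_right _ _).trans (hN.trans hNm))
  rw [Real.norm_of_nonneg (Real.exp_pos _).le, Real.exp_le_exp]
  have hsum : ∑ k ∈ Finset.range q, a k * (m : ℝ) ^ k ≤ A * |(m : ℝ)| ^ (q - 1) := by
    rw [Finset.sum_mul]
    refine Finset.sum_le_sum fun k hk => (le_abs_self _).trans ?_
    rw [abs_mul, abs_pow]
    have : k ≤ q - 1 := by have := Finset.mem_range.mp hk; omega
    gcongr
  have hpow : (m : ℝ) ^ q = |(m : ℝ)| ^ (q - 1) * |(m : ℝ)| := by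
    rw [← hqe.pow_abs, ← pow_succ, Nat.sub_add_cancel hq]
  -- Evenness gives `q ≥ 2`, so the power `q - 1` is at least one.
  have hle : |(m : ℝ)| ≤ |(m : ℝ)| ^ (q - 1) :=
    le_self_pow₀ h1 (by obtain ⟨r, hr⟩ := hqe; omega)
  rw [hpow]
  nlinarith [mul_le_mul_of_nonneg_left h2 (pow_nonneg (abs_nonneg (m : ℝ)) (q - 1))]

lemma sum_window_le (W : ℤ → ℝ) (hW : Summable fun m => Real.exp (W m)) (p : ℕ) (hp : 1 ≤ p)
    (hne : ∀ n : ℕ, (Finset.Icc ((n : ℤ) - p) ((n : ℤ) + p)).Nonempty) :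
    Summable (fun n : ℕ =>
      Real.exp ((Finset.Icc ((n : ℤ) - p) ((n : ℤ) + p)).sup' (hne n) W)) ∧
    ∑' n : ℕ, Real.exp ((Finset.Icc ((n : ℤ) - p) ((n : ℤ) + p)).sup' (hne n) W) ≤
      3 * (∑' m : ℤ, Real.exp (W m)) * p := by
  have hinj (j : ℤ) : Function.Injective fun n : ℕ => (n : ℤ) + j := fun x y h => by
    simpa using h
  have hs (j : ℤ) : Summable fun n : ℕ => Real.exp (W (n + j)) := hW.comp_injective (hinj j)
  have hle (n : ℕ) : Real.exp ((Finset.Icc ((n : ℤ) - p) ((n : ℤ) + p)).sup' (hne n) W) ≤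
      ∑ j ∈ Finset.Icc (-(p : ℤ)) p, Real.exp (W (n + j)) := by
    obtain ⟨m, hm, hmax⟩ := Finset.exists_mem_eq_sup' (hne n) W
    rw [hmax]
    rw [Finset.mem_Icc] at hm
    have := Finset.single_le_sum (f := fun j : ℤ => Real.exp (W (n + j)))
      (s := Finset.Icc (-(p : ℤ)) p) (fun j _ => (Real.exp_pos _).le)
      (a := m - n) (Finset.mem_Icc.mpr (by omega))
    simpa using this
  have hsum : Summable fun n : ℕ => ∑ j ∈ Finset.Icc (-(p : ℤ)) p, Real.exp (W (n + j)) :=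
    summable_sum fun j _ => hs j
  have hsup := Summable.of_nonneg_of_le (fun n => (Real.exp_pos _).le) hle hsum
  refine ⟨hsup, (hsup.tsum_le_tsum hle hsum).trans ?_⟩
  rw [Summable.tsum_finsetSum fun j _ => hs j]
  set S := ∑' m : ℤ, Real.exp (W m)
  have hS : 0 ≤ S := tsum_nonneg fun _ => (Real.exp_pos _).le
  have hshift (j : ℤ) : ∑' n : ℕ, Real.exp (W (n + j)) ≤ S :=
    tsum_comp_le_tsum_of_inj hW (fun _ => (Real.exp_pos _).le) (hinj j)
  have hcard : (Finset.Icc (-(p : ℤ)) p).card = 2 * p + 1 := by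
    rw [Int.card_Icc]
    omega
  refine (Finset.sum_le_card_nsmul _ _ S fun j _ => hshift j).trans ?_
  rw [hcard, nsmul_eq_mul]
  push_cast
  have : (1 : ℝ) ≤ p := by exact_mod_cast hp
  nlinarith


/-- Lemma 8, second assertion, Eq. (272) of the paper. Fix a positive even
integer `q`, a real `a_q > 0` and reals `a_0, …, a_{q−1}`, and write
`W(m) = −a_q m^q + a_{q−1} m^{q−1} + ⋯ + a_1 m + a_0` for integers `m`. There exists a
constant `c' > 0`, depending only on the coefficients and `q` (and not on `p`), such that for
every integer `p ≥ 1` the series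
`∑_{n=0}^∞ exp( max{ W(m) : m ∈ ℤ, n − p ≤ m ≤ n + p } )` converges and is at most
`c' · a_q^{−1/q} · p`. -/
theorem sum_exp_max_le (q : ℕ) (hq : 0 < q) (hqe : Even q)
    (aq : ℝ) (haq : 0 < aq) (a : ℕ → ℝ) :
    ∃ c' : ℝ, 0 < c' ∧ ∀ p : ℕ, 1 ≤ p →
      Summable (fun n : ℕ =>
        Real.exp ((Finset.Icc ((n : ℤ) - p) ((n : ℤ) + p)).sup'
          (Finset.nonempty_Icc.mpr (by omega))
          (fun m : ℤ => -aq * (m : ℝ) ^ q + ∑ k ∈ Finset.range q, a k * (m : ℝ) ^ k))) ∧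
      ∑' n : ℕ,
          Real.exp ((Finset.Icc ((n : ℤ) - p) ((n : ℤ) + p)).sup'
            (Finset.nonempty_Icc.mpr (by omega))
            (fun m : ℤ => -aq * (m : ℝ) ^ q + ∑ k ∈ Finset.range q, a k * (m : ℝ) ^ k)) ≤
        c' * aq ^ (-(1 / (q : ℝ))) * (p : ℝ) := by
  have hg := summable_exp_poly q hq hqe aq haq a
  set S := ∑' m : ℤ,
    Real.exp (-aq * (m : ℝ) ^ q + ∑ k ∈ Finset.range q, a k * (m : ℝ) ^ k) with hSdef
  have hS : 0 < S := hg.tsum_pos (fun _ => (Real.exp_pos _).le) 0 (Real.exp_pos _)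
  refine ⟨3 * S * aq ^ (1 / (q : ℝ)), by positivity, fun p hp => ?_⟩
  have hc : 3 * S * aq ^ (1 / (q : ℝ)) * aq ^ (-(1 / (q : ℝ))) = 3 * S := by
    rw [mul_assoc, ← Real.rpow_add haq, add_neg_cancel, Real.rpow_zero, mul_one]
  rw [hc]
  exact sum_window_le _ hg p hp _
end
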